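/- Assume the family Ψ_n satisfies properties (P1), (P2), (P3). Then for each n ≥ 1 and each i = 1,…,n, the functions x_i ↦ Z_n(x₁,…,x_n) and x_i ↦ Z̄_n^±(x₁,…,x_n) are theta functions of degree 2(n+1), nome p and norm π/2 + η; explicitly, each is entire in x_i and satisfies f(x_i + π) = f(x_i) and f(x_i + πτ) = p^{−2(n+1)} e^{−2i(2(n+1)x_i − (η + π/2))} f(x_i). -/

import Mathlib

noncomputable section

open Complex
open scoped BigOperators

/-- Jacobi theta function `ϑ₁(z|τ)` with nome `p = e^{iπτ}` (Whittaker–Watson convention). -/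
def th1 (z τ : ℂ) : ℂ :=
  -Complex.I * ∑' n : ℤ, (-1 : ℂ) ^ n *
    Complex.exp ((Real.pi : ℂ) * Complex.I * τ * ((n : ℂ) + 1/2) ^ 2 + (2 * (n : ℂ) + 1) * Complex.I * z)

/-- Jacobi theta function `ϑ₂(z|τ)`. -/
def th2 (z τ : ℂ) : ℂ :=
  ∑' n : ℤ,
    Complex.exp ((Real.pi : ℂ) * Complex.I * τ * ((n : ℂ) + 1/2) ^ 2 + (2 * (n : ℂ) + 1) * Complex.I * z)

/-- Jacobi theta function `ϑ₃(z|τ)`. -/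
def th3 (z τ : ℂ) : ℂ :=
  ∑' n : ℤ, Complex.exp ((Real.pi : ℂ) * Complex.I * τ * (n : ℂ) ^ 2 + 2 * (n : ℂ) * Complex.I * z)

/-- Jacobi theta function `ϑ₄(z|τ)`. -/
def th4 (z τ : ℂ) : ℂ :=
  ∑' n : ℤ, (-1 : ℂ) ^ n *
    Complex.exp ((Real.pi : ℂ) * Complex.I * τ * (n : ℂ) ^ 2 + 2 * (n : ℂ) * Complex.I * z)

/-- The crossing parameter `η = π/3`. -/
def ηc : ℂ := (Real.pi : ℂ) / 3

/-- The elliptic nome `p = e^{iπτ}`. -/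
def pnome (τ : ℂ) : ℂ := Complex.exp ((Real.pi : ℂ) * Complex.I * τ)

/-- `ζ = (ϑ₁(η,p²)/ϑ₄(η,p²))²`. -/
def zet (τ : ℂ) : ℂ := (th1 ηc (2 * τ) / th4 ηc (2 * τ)) ^ 2

/-- The nome `p` is real with `0 < p < 1`. -/
def preal (τ : ℂ) : Prop := (pnome τ).im = 0 ∧ 0 < (pnome τ).re ∧ (pnome τ).re < 1

/-- A tuple given by a list of prescribed entries, padded by zeros. -/
def padded {n : ℕ} (l : List ℂ) : Fin n → ℂ := fun j => l.getD (j : ℕ) 0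

/-- Extension of a tuple by a list of prescribed further entries (padded by zeros). -/
def extL {m n : ℕ} (w : Fin m → ℂ) (l : List ℂ) : Fin n → ℂ :=
  fun j => if h : (j : ℕ) < m then w ⟨j, h⟩ else l.getD ((j : ℕ) - m) 0

/-- First `k` entries of a `2k`-tuple. -/
def firstHalf {k : ℕ} (x : Fin (2 * k) → ℂ) : Fin k → ℂ :=
  fun i => x ⟨(i : ℕ), by have := i.2; omega⟩

/-- Last `k` entries of a `2k`-tuple. -/
def secondHalf {k : ℕ} (x : Fin (2 * k) → ℂ) : Fin k → ℂ :=
  fun i => x ⟨k + (i : ℕ), by have := i.2; omega⟩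

/-- `𝕙(x,y) = ϑ₁(x−y+η)ϑ₁(x−y−η)ϑ₁(x+y+η)ϑ₁(x+y−η)`. -/
def hh (τ x y : ℂ) : ℂ :=
  th1 (x - y + ηc) τ * th1 (x - y - ηc) τ * th1 (x + y + ηc) τ * th1 (x + y - ηc) τ

/-- `𝔻(x₁,…,x_k) = ∏_{i<j} ϑ₁(x_j−x_i)ϑ₁(x_j+x_i)`. -/
def vdTheta (τ : ℂ) {k : ℕ} (y : Fin k → ℂ) : ℂ :=
  ∏ i : Fin k, ∏ j : Fin k, if i < j then th1 (y j - y i) τ * th1 (y j + y i) τ else 1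

/-- The elliptic Tsuchiya determinant `ℍ_{2k}(x₁,…,x_k; x_{k+1},…,x_{2k})`. -/
def tsuchiya (τ : ℂ) (k : ℕ) (x : Fin (2 * k) → ℂ) : ℂ :=
  (∏ i : Fin k, ∏ j : Fin k, hh τ (firstHalf x i) (secondHalf x j))
    / (vdTheta τ (firstHalf x) * vdTheta τ (secondHalf x))
    * Matrix.det (Matrix.of fun i j : Fin k => (hh τ (firstHalf x i) (secondHalf x j))⁻¹)

/-- The expression defining the elliptic Tsuchiya determinant is well defined:
the Vandermonde-type denominators and the entries `𝕙(x_i,x_{j+k})` are nonzero. -/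
def tsuDefined (τ : ℂ) (k : ℕ) (x : Fin (2 * k) → ℂ) : Prop :=
  (∀ i j : Fin k, i ≠ j →
    th1 (firstHalf x j - firstHalf x i) τ ≠ 0 ∧ th1 (firstHalf x j + firstHalf x i) τ ≠ 0) ∧
  (∀ i j : Fin k, i ≠ j →
    th1 (secondHalf x j - secondHalf x i) τ ≠ 0 ∧ th1 (secondHalf x j + secondHalf x i) τ ≠ 0) ∧
  (∀ i j : Fin k, hh τ (firstHalf x i) (secondHalf x j) ≠ 0)

/-- `h(w,w') = 1 − (3+ζ²)ww' + (1−ζ²)ww'(w+w')`. -/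
def hpol (ζ w w' : ℂ) : ℂ := 1 - (3 + ζ ^ 2) * w * w' + (1 - ζ ^ 2) * w * w' * (w + w')

/-- Vandermonde product `Δ(w₁,…,w_k) = ∏_{i<j}(w_j − w_i)`. -/
def vdm {k : ℕ} (y : Fin k → ℂ) : ℂ :=
  ∏ i : Fin k, ∏ j : Fin k, if i < j then y j - y i else 1

/-- The determinant-ratio expression defining the polynomial `H_{2k}`. -/
def Hratio (ζ : ℂ) (k : ℕ) (w : Fin (2 * k) → ℂ) : ℂ :=
  (∏ i : Fin k, ∏ j : Fin k, hpol ζ (firstHalf w i) (secondHalf w j))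
    / (vdm (firstHalf w) * vdm (secondHalf w))
    * Matrix.det (Matrix.of fun i j : Fin k => (hpol ζ (firstHalf w i) (secondHalf w j))⁻¹)

/-- The expression `Hratio` is well defined at `w`. -/
def HratioDefined (ζ : ℂ) (k : ℕ) (w : Fin (2 * k) → ℂ) : Prop :=
  (∀ i j : Fin k, i ≠ j → firstHalf w i ≠ firstHalf w j) ∧
  (∀ i j : Fin k, i ≠ j → secondHalf w i ≠ secondHalf w j) ∧
  (∀ i j : Fin k, hpol ζ (firstHalf w i) (secondHalf w j) ≠ 0)

/-- `H` is the family of Rosengren–Zinn-Justin polynomials `H_{2k}` for parameter `ζ`: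
for each `k`, `H k` is a polynomial function of the `2k` variables agreeing with the
determinant-ratio formula wherever the latter is defined, and `H 0 = 1`. -/
def IsHFamily (ζ : ℂ) (H : (k : ℕ) → (Fin (2 * k) → ℂ) → ℂ) : Prop :=
  (∀ w, H 0 w = 1) ∧
  (∀ k : ℕ, ∃ P : MvPolynomial (Fin (2 * k)) ℂ, ∀ w, H k w = MvPolynomial.eval w P) ∧
  (∀ (k : ℕ) (w : Fin (2 * k) → ℂ), HratioDefined ζ k w → H k w = Hratio ζ k w)

/-- Vertex weight `a(u)`. -/
def av (τ u : ℂ) : ℂ := th4 (2*ηc) (2*τ) * th1 (u + 2*ηc) (2*τ) * th4 u (2*τ)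
/-- Vertex weight `b(u)`. -/
def bv (τ u : ℂ) : ℂ := th4 (2*ηc) (2*τ) * th4 (u + 2*ηc) (2*τ) * th1 u (2*τ)
/-- Vertex weight `c(u)`. -/
def cv (τ u : ℂ) : ℂ := th1 (2*ηc) (2*τ) * th4 (u + 2*ηc) (2*τ) * th4 u (2*τ)
/-- Vertex weight `d(u)`. -/
def dv (τ u : ℂ) : ℂ := th1 (2*ηc) (2*τ) * th1 (u + 2*ηc) (2*τ) * th1 u (2*τ)
/-- `r(u) = a(u) + b(u)`. -/
def rv (τ u : ℂ) : ℂ := av τ u + bv τ u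

/-- Entries of the `R`-matrix of the eight-vertex model, in the basis `{↑↑,↑↓,↓↑,↓↓}`
identified with `Fin 2 × Fin 2` (`↑ = 0`, `↓ = 1`). -/
def Rent (τ u : ℂ) (p q : Fin 2 × Fin 2) : ℂ :=
  if p = q then (if p.1 = p.2 then av τ u else bv τ u)
  else if q = (p.2, p.1) then cv τ u
  else if p.1 = p.2 ∧ q.1 = q.2 then dv τ u
  else 0

/-- Entries of `Ř(u) = 𝒫 R(u)`. -/
def Rcheckent (τ u : ℂ) (p q : Fin 2 × Fin 2) : ℂ := Rent τ u (p.2, p.1) q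

/-- The boundary vector `χ(x) ∈ ℂ²⊗ℂ²`. -/
def chiV (τ lam x : ℂ) : Fin 2 × Fin 2 → ℂ := fun p =>
  if p = ((0 : Fin 2), (1 : Fin 2)) then th1 (x + lam) (2*τ) * th4 (x - lam - 2*ηc) (2*τ)
  else if p = ((1 : Fin 2), (0 : Fin 2)) then th1 (x - lam - 2*ηc) (2*τ) * th4 (x + lam) (2*τ)
  else 0

/-- The boundary vector `χ̄(x) ∈ ℂ²⊗ℂ²`. -/
def chibarV (τ lam x : ℂ) : Fin 2 × Fin 2 → ℂ := fun p =>
  if p = ((0 : Fin 2), (0 : Fin 2)) then th1 (x + lam) (2*τ) * th1 (x - lam - 2*ηc) (2*τ)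
  else if p = ((1 : Fin 2), (1 : Fin 2)) then th4 (x - lam - 2*ηc) (2*τ) * th4 (x + lam) (2*τ)
  else 0

/-- A family `Ψ_n(u₁,…,u_{2n+1}) ∈ (ℂ²)^{⊗(2n+1)}`, represented by its components
with respect to spin configurations `α : Fin (2n+1) → Fin 2` (`↑ = 0`, `↓ = 1`). -/
abbrev PsiFam := (n : ℕ) → (Fin (2 * n + 1) → ℂ) → (Fin (2 * n + 1) → Fin 2) → ℂ

/-- The action of `Ř(u)` on tensor factors `i`, `j` of `(ℂ²)^{⊗L}`. -/
def applyRc (τ u : ℂ) {L : ℕ} (i j : Fin L) (ψ : (Fin L → Fin 2) → ℂ) :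
    (Fin L → Fin 2) → ℂ := fun α =>
  ∑ s : Fin 2, ∑ t : Fin 2,
    Rcheckent τ u (α i, α j) (s, t) * ψ (Function.update (Function.update α i s) j t)

/-- Spin flip. -/
def flipS : Fin 2 → Fin 2 := fun s => if s = 0 then 1 else 0

/-- Components of the singlet `s = ↑↓ − ↓↑`. -/
def singletC : Fin 2 → Fin 2 → ℂ := fun s t =>
  if s = 0 ∧ t = 1 then 1 else if s = 1 ∧ t = 0 then -1 else 0

/-- Delete the entries at positions `i`, `i+1` from a tuple. -/
def delTwo {α : Type*} {n : ℕ} (i : ℕ) (u : Fin (2 * (n + 1) + 1) → α) : Fin (2 * n + 1) → α :=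
  fun j => if _h : (j : ℕ) < i then u ⟨j, by have := j.2; omega⟩
           else u ⟨(j : ℕ) + 2, by have := j.2; omega⟩

/-- The components of `Ψ_n` are entire functions of each `u_i`. -/
def PsiEntire (Ψ : PsiFam) : Prop :=
  ∀ (n : ℕ) (u : Fin (2*n+1) → ℂ) (i : Fin (2*n+1)) (α : Fin (2*n+1) → Fin 2),
    Differentiable ℂ fun z => Ψ n (Function.update u i z) α

/-- (P1): the exchange relations. -/
def PsiP1 (τ : ℂ) (Ψ : PsiFam) : Prop :=
  ∀ (n : ℕ) (u : Fin (2*n+1) → ℂ) (i j : Fin (2*n+1)), (j : ℕ) = (i : ℕ) + 1 →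
    applyRc τ (u j - u i) i j (Ψ n u)
      = fun α => rv τ (u j - u i) * Ψ n (fun l => u (Equiv.swap i j l)) α

/-- (P2): local spin flips. -/
def PsiP2 (τ : ℂ) (Ψ : PsiFam) : Prop :=
  ∀ (n : ℕ) (u : Fin (2*n+1) → ℂ) (i : Fin (2*n+1)) (α : Fin (2*n+1) → Fin 2),
    Ψ n u (Function.update α i (flipS (α i)))
      = (-(pnome τ)) ^ n * Complex.exp (-Complex.I * ∑ j, (u j - u i))
        * Ψ n (Function.update u i (u i + Real.pi * τ)) α

/-- (P3): quasi-periodicity of `Ψ_n` in each `u_i`. -/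
def PsiP3 (τ : ℂ) (Ψ : PsiFam) : Prop :=
  ∀ (n : ℕ) (u : Fin (2*n+1) → ℂ) (i : Fin (2*n+1)),
    (Ψ n (Function.update u i (u i + Real.pi))
      = fun α => (∏ j ∈ Finset.univ.erase i, (if α j = 0 then (1:ℂ) else -1)) * Ψ n u α) ∧
    (Ψ n (Function.update u i (u i + 2 * Real.pi * τ))
      = fun α => (pnome τ ^ (4*n))⁻¹ *
          Complex.exp (-2 * Complex.I * ∑ j, (u i - u j)) * Ψ n u α)

/-- (P4): the wheel condition. -/
def PsiP4 (Ψ : PsiFam) : Prop :=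
  ∀ (n : ℕ) (u : Fin (2*n+1) → ℂ),
    (∃ i j k : Fin (2*n+1), i < j ∧ j < k ∧ u j = u i + 2*ηc ∧ u k = u i + 4*ηc) →
    Ψ n u = 0

/-- (P5): the reduction relations. -/
def PsiP5 (τ : ℂ) (Ψ : PsiFam) : Prop :=
  ∀ (n : ℕ) (u : Fin (2*(n+1)+1) → ℂ) (i : ℕ) (hi : i + 1 < 2*(n+1)+1),
    u ⟨i+1, hi⟩ = u ⟨i, by omega⟩ + 2*ηc →
    Ψ (n+1) u = fun α =>
      (∏ j ∈ (Finset.univ.erase (⟨i, by omega⟩ : Fin (2*(n+1)+1))).erase ⟨i+1, hi⟩,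
          th1 (u ⟨i, by omega⟩ - u j - 2*ηc) τ)
        * singletC (α ⟨i, by omega⟩) (α ⟨i+1, hi⟩)
        * Ψ n (delTwo i u) (delTwo i α)

/-- (P6): `Ψ₀ = ↑ + ↓`. -/
def PsiP6 (Ψ : PsiFam) : Prop := ∀ u α, Ψ 0 u α = 1

/-- The inhomogeneity parameters `(x₁,−x₁,…,x_n,−x_n,0)`. -/
def interleave {n : ℕ} (x : Fin n → ℂ) : Fin (2*n+1) → ℂ := fun j =>
  if h : (j : ℕ) < 2*n then
    (if (j : ℕ) % 2 = 0 then x ⟨(j:ℕ)/2, by omega⟩ else -x ⟨(j:ℕ)/2, by omega⟩)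
  else 0

/-- Components of `χ(x)`. -/
def chiC (τ lam x : ℂ) (s t : Fin 2) : ℂ :=
  if s = 0 ∧ t = 1 then th1 (x + lam) (2*τ) * th4 (x - lam - 2*ηc) (2*τ)
  else if s = 1 ∧ t = 0 then th1 (x - lam - 2*ηc) (2*τ) * th4 (x + lam) (2*τ)
  else 0

/-- Components of `χ̄(x)`. -/
def chibarC (τ lam x : ℂ) (s t : Fin 2) : ℂ :=
  if s = 0 ∧ t = 0 then th1 (x + lam) (2*τ) * th1 (x - lam - 2*ηc) (2*τ)
  else if s = 1 ∧ t = 1 then th4 (x - lam - 2*ηc) (2*τ) * th4 (x + lam) (2*τ)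
  else 0

/-- The scalar product `Z_n(x₁,…,x_n) = ⟨ξ_n(x₁,…,x_n), Ψ_n(x₁,−x₁,…,x_n,−x_n,0)⟩`. -/
def Zfun (τ lam : ℂ) (Ψ : PsiFam) (n : ℕ) (x : Fin n → ℂ) : ℂ :=
  ∑ α : Fin (2*n+1) → Fin 2,
    (∏ m : Fin n, chiC τ lam (x m)
        (α ⟨2*(m:ℕ), by have := m.2; omega⟩) (α ⟨2*(m:ℕ)+1, by have := m.2; omega⟩))
      * (if α ⟨2*n, by omega⟩ = 0 then (1:ℂ) else 0)
      * Ψ n (interleave x) α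

/-- The scalar product `Z̄_n^±(x₁,…,x_n)`, with `ε = ±1`. -/
def Zbarfun (τ lam ε : ℂ) (Ψ : PsiFam) (n : ℕ) (x : Fin n → ℂ) : ℂ :=
  ∑ α : Fin (2*n+1) → Fin 2,
    (∏ m : Fin n, chibarC τ lam (x m)
        (α ⟨2*(m:ℕ), by have := m.2; omega⟩) (α ⟨2*(m:ℕ)+1, by have := m.2; omega⟩))
      * (if α ⟨2*n, by omega⟩ = 0 then (1:ℂ) else ε)
      * Ψ n (interleave x) α

/-- The normalisation constant `𝒩_n`. -/
def Ncoef (τ : ℂ) (n : ℕ) : ℂ :=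
  (-1 : ℂ) ^ ((n+1)/2) * (th1 ηc τ ^ (n^2))⁻¹ * (th4 0 (2*τ) / th4 ηc (2*τ)) ^ (n*(n+1)/2)

/-- The vector `ψ_n = 𝒩_n Ψ_n(0,…,0)`. -/
def psiH (τ : ℂ) (Ψ : PsiFam) (n : ℕ) (α : Fin (2*n+1) → Fin 2) : ℂ :=
  Ncoef τ n * Ψ n (fun _ => 0) α

/-- The scalar product `S_n(μ) = ((⟨↑↓| + μ⟨↓↑|)^{⊗n} ⊗ ⟨↑|) ψ_n`. -/
def Sfun (τ : ℂ) (Ψ : PsiFam) (n : ℕ) (μ : ℂ) : ℂ :=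
  ∑ α : Fin (2*n+1) → Fin 2,
    (∏ m : Fin n,
      (if α ⟨2*(m:ℕ), by have := m.2; omega⟩ = 0 ∧ α ⟨2*(m:ℕ)+1, by have := m.2; omega⟩ = 1
        then (1:ℂ)
       else if α ⟨2*(m:ℕ), by have := m.2; omega⟩ = 1 ∧ α ⟨2*(m:ℕ)+1, by have := m.2; omega⟩ = 0
        then μ
       else 0))
      * (if α ⟨2*n, by omega⟩ = 0 then (1:ℂ) else 0) * psiH τ Ψ n α

/-- The scalar product `S̄_n^±(ν) = ((⟨↑↑| + ν⟨↓↓|)^{⊗n} ⊗ (⟨↑| ± ⟨↓|)) ψ_n`, with `ε = ±1`. -/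
def Sbarfun (τ ε : ℂ) (Ψ : PsiFam) (n : ℕ) (ν : ℂ) : ℂ :=
  ∑ α : Fin (2*n+1) → Fin 2,
    (∏ m : Fin n,
      (if α ⟨2*(m:ℕ), by have := m.2; omega⟩ = 0 ∧ α ⟨2*(m:ℕ)+1, by have := m.2; omega⟩ = 0
        then (1:ℂ)
       else if α ⟨2*(m:ℕ), by have := m.2; omega⟩ = 1 ∧ α ⟨2*(m:ℕ)+1, by have := m.2; omega⟩ = 1
        then ν
       else 0))
      * (if α ⟨2*n, by omega⟩ = 0 then (1:ℂ) else ε) * psiH τ Ψ n α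

/-- The alternating spin configuration `↑↓↑↓⋯↑`. -/
def altConf {L : ℕ} : Fin L → Fin 2 := fun j => if (j : ℕ) % 2 = 0 then 0 else 1

/-- The fully polarised spin configuration `↓⋯↓`. -/
def downConf {L : ℕ} : Fin L → Fin 2 := fun _ => 1

/-- The spin configuration `↑⋯↑↓` with a single `↓` at the last site. -/
def lastDownConf {n : ℕ} : Fin (2*n+1) → Fin 2 := fun j => if (j : ℕ) = 2*n then 1 else 0

/-- `J₂ = −1/2`. -/
def J2c : ℂ := -(1/2)
/-- `J₃ = 1/(1+ζ)`. -/
def J3c (ζ : ℂ) : ℂ := 1/(1+ζ)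
/-- `J₄ = 1/(1−ζ)`. -/
def J4c (ζ : ℂ) : ℂ := 1/(1-ζ)
/-- `μ̄ = (μ−1)²/((ζ²−1)μ)`. -/
def mubar (ζ μ : ℂ) : ℂ := (μ - 1)^2 / ((ζ^2 - 1)*μ)
/-- `ν̄ = (ν−ζ)(νζ−1)/((ζ²−1)ν)`. -/
def nubar (ζ ν : ℂ) : ℂ := (ν - ζ)*(ν*ζ - 1) / ((ζ^2 - 1)*ν)

/-- The elliptic function `w(x)`. -/
def wfun (τ x : ℂ) : ℂ :=
  th4 ηc (2*τ) / th4 0 (2*τ) * th1 x τ ^ 2 / (th1 (x - ηc) τ * th1 (x + ηc) τ)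

/-- `β₂ = η + π/2`. -/
def β2c : ℂ := ηc + (Real.pi : ℂ)/2
/-- `β₃ = η + π/2 + πτ/2`. -/
def β3c (τ : ℂ) : ℂ := ηc + (Real.pi : ℂ)/2 + (Real.pi : ℂ)*τ/2
/-- `β₄ = η + πτ/2`. -/
def β4c (τ : ℂ) : ℂ := ηc + (Real.pi : ℂ)*τ/2

/-- `f` is an (even) theta function of degree `m`, nome `p = e^{iπτ}` and norm `0`
with respect to each of its variables. -/
def ThetaLike (τ : ℂ) (m : ℕ) {n : ℕ} (X : (Fin n → ℂ) → ℂ) : Prop :=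
  ∀ (x : Fin n → ℂ) (i : Fin n),
    Differentiable ℂ (fun z => X (Function.update x i z)) ∧
    (∀ z, X (Function.update x i (z + Real.pi)) = X (Function.update x i z)) ∧
    (∀ z, X (Function.update x i (z + Real.pi * τ))
        = ((-(pnome τ)) ^ m)⁻¹ * Complex.exp (-2 * Complex.I * ((m : ℂ) * z))
            * X (Function.update x i z)) ∧
    (∀ z, X (Function.update x i (-z)) = X (Function.update x i z))



/-- The integral of an entire `1`-periodic function over a horizontal period does not depend
on the base point. -/
lemma integral_period_shift {K : ℂ → ℂ} (hK : Differentiable ℂ K)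
    (hper : ∀ s, K (s + 1) = K s) (c : ℂ) :
    ∫ x in (0 : ℝ)..1, K (x + c) = ∫ x in (0 : ℝ)..1, K x := by
  obtain ⟨P, hP⟩ := hK.isExactOn_univ
  have hderiv : ∀ z, HasDerivAt P (K z) z := fun z => hP z (Set.mem_univ z)
  have hint : ∀ d : ℂ, ∫ x in (0 : ℝ)..1, K (x + d) = P (d + 1) - P d := by
    intro d
    have hcont : Continuous fun x : ℝ => K (x + d) :=
      hK.continuous.comp (by fun_prop)
    rw [intervalIntegral.integral_eq_sub_of_hasDerivAt (f := fun x : ℝ => P (x + d))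
      (fun x _ => ?_) (hcont.intervalIntegrable _ _)]
    · simp [add_comm]
    · exact ((hderiv (x + d)).comp_add_const (x : ℂ) d).comp_ofReal
  have hder : ∀ z, HasDerivAt (fun d => P (d + 1) - P d) 0 z := by
    intro z
    have h := ((hderiv (z + 1)).comp_add_const z 1).sub (hderiv z)
    rwa [hper, sub_self] at h
  have hconst := is_const_of_deriv_eq_zero (fun z => (hder z).differentiableAt)
    (fun z => (hder z).deriv) c 0
  have h0 := hint 0
  simp only [add_zero] at h0
  rw [hint c, h0]
  simpa using hconst

/-- A continuous `1`-periodic function whose Fourier coefficients all vanish is zero. -/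
lemma eq_zero_of_fourier_integrals {F : ℝ → ℂ} (hF : Continuous F)
    (hper : Function.Periodic F 1)
    (h : ∀ m : ℤ, ∫ x in (0 : ℝ)..1, Complex.exp (2 * Real.pi * Complex.I * m * x) * F x = 0)
    (x : ℝ) : F x = 0 := by
  let f : C(UnitAddCircle, ℂ) := ⟨hper.lift, continuous_coinduced_dom.mpr hF⟩
  have hcoef : fourierCoeff f = 0 := by
    funext m
    rw [fourierCoeff_eq_intervalIntegral f m 0]
    simp only [zero_add, Pi.zero_apply]
    refine smul_eq_zero_of_right _ (Eq.trans ?_ (h (-m)))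
    refine intervalIntegral.integral_congr fun y _ => ?_
    simp only [fourier_coe_apply, smul_eq_mul]
    congr 2
    push_cast
    ring
  have hsum : Summable (fourierCoeff f) := by rw [hcoef]; exact summable_zero
  have := has_pointwise_sum_fourier_series_of_summable hsum (x : UnitAddCircle)
  rw [hcoef] at this
  simp only [Pi.zero_apply, zero_smul] at this
  exact this.unique hasSum_zero

/-- An entire function with the quasi-periodicity of a theta function of degree one vanishes
as soon as its mean over a horizontal period does. -/
lemma degree_one_eq_zero {F : ℂ → ℂ} {T C : ℂ} (hF : Differentiable ℂ F) (hC : C ≠ 0)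
    (hper : ∀ s, F (s + 1) = F s)
    (hquasi : ∀ s, F (s + T) = C * Complex.exp (-2 * Real.pi * Complex.I * s) * F s)
    (h0 : ∫ x in (0 : ℝ)..1, F x = 0) (c : ℂ) : F c = 0 := by
  let K : ℤ → ℂ → ℂ := fun m s => Complex.exp (2 * Real.pi * Complex.I * m * s) * F s
  have hK : ∀ m, Differentiable ℂ (K m) := fun m => by
    have : Differentiable ℂ fun s : ℂ => Complex.exp (2 * Real.pi * Complex.I * m * s) := by
      fun_prop
    exact this.mul hF
  have hexp : ∀ (m : ℤ), Complex.exp (2 * Real.pi * Complex.I * m) = 1 := fun m => by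
    rw [← Complex.exp_int_mul_two_pi_mul_I m]; congr 1; ring
  have hKper : ∀ m s, K m (s + 1) = K m s := fun m s => by
    simp only [K, hper, mul_add, mul_one, Complex.exp_add, hexp]
  have hrec : ∀ m, ∫ x in (0 : ℝ)..1, K m x
      = C * Complex.exp (2 * Real.pi * Complex.I * m * T) * ∫ x in (0 : ℝ)..1, K (m - 1) x := by
    intro m
    rw [← integral_period_shift (hK m) (hKper m) T, ← intervalIntegral.integral_const_mul]
    refine intervalIntegral.integral_congr fun x _ => ?_
    simp only [K, hquasi]
    have : Complex.exp (2 * Real.pi * Complex.I * m * (x + T))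
        * Complex.exp (-2 * Real.pi * Complex.I * x)
        = Complex.exp (2 * Real.pi * Complex.I * m * T)
          * Complex.exp (2 * Real.pi * Complex.I * ((m - 1 : ℤ) : ℂ) * x) := by
      rw [← Complex.exp_add, ← Complex.exp_add]; congr 1; push_cast; ring
    linear_combination C * F x * this
  have hall : ∀ m : ℤ, ∫ x in (0 : ℝ)..1, K m x = 0 := by
    intro m
    induction m using Int.induction_on with
    | zero => simpa [K] using h0
    | succ k ih => rw [hrec]; simp [ih]
    | pred k ih =>
      rw [hrec] at ih
      simpa [hC, Complex.exp_ne_zero] using ih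
  have key := eq_zero_of_fourier_integrals (F := fun x : ℝ => F (x + c))
    (hF.continuous.comp (by fun_prop))
    (fun x => by
      have := hper (x + c)
      simp only [Complex.ofReal_add, Complex.ofReal_one]
      rw [← this]; congr 1; ring)
    (fun m => by
      have hs := integral_period_shift (hK m) (hKper m) c
      rw [hall m] at hs
      have : ∀ x : ℝ, Complex.exp (2 * Real.pi * Complex.I * m * x) * F (x + c)
          = Complex.exp (-(2 * Real.pi * Complex.I * m * c)) * K m (x + c) := by
        intro x
        simp only [K]
        rw [← mul_assoc, ← Complex.exp_add]
        congr 2; ring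
      simp only [this]
      rw [intervalIntegral.integral_const_mul, hs, mul_zero]) 0
  simpa using key

/-- Two theta functions of degree one with the same quasi-periodicity are proportional. -/
lemma degree_one_proportional {G H : ℂ → ℂ} {T C : ℂ} (hG : Differentiable ℂ G)
    (hH : Differentiable ℂ H) (hC : C ≠ 0)
    (hGper : ∀ s, G (s + 1) = G s) (hHper : ∀ s, H (s + 1) = H s)
    (hGq : ∀ s, G (s + T) = C * Complex.exp (-2 * Real.pi * Complex.I * s) * G s)
    (hHq : ∀ s, H (s + T) = C * Complex.exp (-2 * Real.pi * Complex.I * s) * H s)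
    (s t : ℂ) : G s * H t = G t * H s := by
  set g := ∫ x in (0 : ℝ)..1, G x with hg
  set h := ∫ x in (0 : ℝ)..1, H x with hh
  by_cases hzero : h = 0
  · have := degree_one_eq_zero hH hC hHper hHq hzero
    simp [this]
  · have hcG : Continuous fun x : ℝ => G x := hG.continuous.comp Complex.continuous_ofReal
    have hcH : Continuous fun x : ℝ => H x := hH.continuous.comp Complex.continuous_ofReal
    have key : ∀ c, h * G c - g * H c = 0 := by
      refine degree_one_eq_zero (F := fun c => h * G c - g * H c) (T := T)
        (by fun_prop) hC (fun s => ?_) (fun s => ?_) ?_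
      · simp only [hGper, hHper]
      · simp only [hGq, hHq]; ring
      · rw [intervalIntegral.integral_sub ((hcG.const_mul h).intervalIntegrable _ _)
          ((hcH.const_mul g).intervalIntegrable _ _), intervalIntegral.integral_const_mul,
          intervalIntegral.integral_const_mul, ← hg, ← hh]
        ring
    apply mul_left_cancel₀ hzero
    linear_combination H t * key s - H s * key t

/-- The two-variable Jacobi theta function does not vanish identically in its first variable. -/
lemma exists_jacobiTheta₂_ne_zero {T : ℂ} (hT : 0 < T.im) : ∃ s, jacobiTheta₂ s T ≠ 0 := by
  by_contra! hzero
  let f : ℤ → C(ℝ, ℂ) := fun n => ⟨fun x => jacobiTheta₂_term n x T, by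
    unfold jacobiTheta₂_term; fun_prop⟩
  have hbound : ∀ n, ‖(f n).restrict (⟨Set.uIcc 0 1, isCompact_uIcc⟩ :
      TopologicalSpace.Compacts ℝ)‖ ≤ ‖jacobiTheta₂_term n 0 T‖ := by
    intro n
    refine (ContinuousMap.norm_le _ (norm_nonneg _)).mpr fun x => ?_
    simp [f, norm_jacobiTheta₂_term]
  have hsum := Summable.of_nonneg_of_le (fun _ => norm_nonneg _) hbound
    ((summable_jacobiTheta₂_term_iff 0 T).mpr hT).norm
  have hint := intervalIntegral.hasSum_intervalIntegral_of_summable_norm hsum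
  have hz : ∀ x : ℝ, ∑' n, f n x = 0 := fun x => hzero x
  simp only [hz, intervalIntegral.integral_zero] at hint
  have hterm : ∀ n : ℤ, n ≠ 0 → ∫ x in (0 : ℝ)..1, f n x = 0 := by
    intro n hn
    have hne : (2 * Real.pi * Complex.I * n : ℂ) ≠ 0 := by
      simp [Real.pi_ne_zero, hn]
    have : ∀ x : ℝ, f n x = Complex.exp (Real.pi * Complex.I * n ^ 2 * T)
        * Complex.exp (2 * Real.pi * Complex.I * n * x) := by
      intro x
      simp only [f, ContinuousMap.coe_mk, jacobiTheta₂_term]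
      rw [Complex.exp_add, mul_comm]
    simp only [this]
    rw [intervalIntegral.integral_const_mul, integral_exp_mul_complex hne]
    have h1 : Complex.exp (2 * Real.pi * Complex.I * n) = 1 := by
      rw [← Complex.exp_int_mul_two_pi_mul_I n]; congr 1; ring
    simp [h1]
  have hone := hint.unique (hasSum_single 0 hterm)
  simp [f, jacobiTheta₂_term] at hone

/-- A separately entire function which is a theta function of degree one in its first variable
is entire along every entire curve. -/
lemma differentiable_degree_one {G : ℂ → ℂ → ℂ} {T : ℂ} (hT : 0 < T.im) {β l m : ℂ → ℂ}
    (hβ : Differentiable ℂ β) (hl : Differentiable ℂ l) (hm : Differentiable ℂ m)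
    (hG₁ : ∀ v, Differentiable ℂ fun s => G s v) (hG₂ : ∀ s, Differentiable ℂ (G s))
    (hper : ∀ s v, G (s + 1) v = G s v)
    (hquasi : ∀ s v, G (s + T) v
      = Complex.exp (β v) * Complex.exp (-2 * Real.pi * Complex.I * s) * G s v) :
    Differentiable ℂ fun z => G (l z) (m z) := by
  have hpi : (2 * Real.pi * Complex.I : ℂ) ≠ 0 := by simp [Real.pi_ne_zero]
  have hθ : Differentiable ℂ fun s => jacobiTheta₂ s T :=
    fun s => differentiableAt_jacobiTheta₂_fst s hT
  let γ : ℂ → ℂ := fun v => -(β v + Real.pi * Complex.I * T) / (2 * Real.pi * Complex.I)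
  have hγ : Differentiable ℂ γ := by fun_prop
  have hprop : ∀ s t v, G s v * jacobiTheta₂ (t + γ v) T = G t v * jacobiTheta₂ (s + γ v) T := by
    intro s t v
    refine degree_one_proportional (hG₁ v) (H := fun s => jacobiTheta₂ (s + γ v) T)
      (hθ.comp (by fun_prop)) (Complex.exp_ne_zero (β v)) (fun s => hper s v) (fun s => ?_)
      (fun s => hquasi s v) (fun s => ?_) s t
    · rw [add_right_comm, jacobiTheta₂_add_left]
    · rw [add_right_comm, jacobiTheta₂_add_left', ← Complex.exp_add]
      congr 2
      simp only [γ]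
      field_simp
      ring
  intro z
  obtain ⟨s, hs⟩ := exists_jacobiTheta₂_ne_zero hT
  have hden : Differentiable ℂ fun w => jacobiTheta₂ (s - γ (m z) + γ (m w)) T :=
    hθ.comp (by fun_prop)
  have hnum : Differentiable ℂ fun w => jacobiTheta₂ (l w + γ (m w)) T :=
    hθ.comp (by fun_prop)
  have hne : jacobiTheta₂ (s - γ (m z) + γ (m z)) T ≠ 0 := by simpa using hs
  have hev : ∀ᶠ w in nhds z, jacobiTheta₂ (s - γ (m z) + γ (m w)) T ≠ 0 :=
    hden.continuous.continuousAt.eventually_ne hne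
  have hval : DifferentiableAt ℂ (fun w => G (s - γ (m z)) (m w)) z :=
    ((hG₂ _).comp hm) z
  refine ((hval.mul (hnum z)).div (hden z) hne).congr_of_eventuallyEq ?_
  filter_upwards [hev] with w hw
  rw [Pi.div_apply, Pi.mul_apply, eq_div_iff hw, hprop]

/-- A separately entire function which is a theta function of positive degree in its first
variable is entire along every entire curve. -/
lemma differentiable_of_quasiperiodic {f : ℂ → ℂ → ℂ} {τ : ℂ} (hτ : 0 < τ.im) {N : ℕ}
    (hN : 0 < N) {β l m : ℂ → ℂ}
    (hβ : Differentiable ℂ β) (hl : Differentiable ℂ l) (hm : Differentiable ℂ m)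
    (hf₁ : ∀ v, Differentiable ℂ fun s => f s v) (hf₂ : ∀ s, Differentiable ℂ (f s))
    (hper : ∀ s v, f (s + 1) v = f s v)
    (hquasi : ∀ s v, f (s + τ) v
      = Complex.exp (β v) * Complex.exp (-2 * Real.pi * Complex.I * (N * s)) * f s v) :
    Differentiable ℂ fun z => f (l z) (m z) := by
  have hN0 : (N : ℂ) ≠ 0 := by exact_mod_cast hN.ne'
  let ω : ℂ := Complex.exp (-(2 * Real.pi * Complex.I / N))
  have hω : IsPrimitiveRoot ω N := by
    have := (Complex.isPrimitiveRoot_exp N hN.ne').inv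
    rwa [← Complex.exp_neg] at this
  let g : ℕ → ℂ → ℂ → ℂ := fun k s v =>
    ∑ j ∈ Finset.range N, (ω ^ j) ^ k * f (s + j / N) v
  let G : ℕ → ℂ → ℂ → ℂ := fun k s v =>
    Complex.exp (-(2 * Real.pi * Complex.I * k / N * s)) * g k (s / N) v
  have hg₁ : ∀ k v, Differentiable ℂ fun s => g k s v := fun k v =>
    Differentiable.fun_sum fun j _ =>
      ((hf₁ v).comp (by fun_prop : Differentiable ℂ fun s : ℂ => s + j / N)).const_mul _
  have hg₂ : ∀ k s, Differentiable ℂ (g k s) := fun k s =>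
    Differentiable.fun_sum fun j _ => (hf₂ _).const_mul _
  have hgstep : ∀ k s v, ω ^ k * g k (s + 1 / N) v = g k s v := by
    intro k s v
    let F : ℕ → ℂ := fun j => (ω ^ j) ^ k * f (s + j / N) v
    have hF : F N = F 0 := by
      simp only [F, hω.pow_eq_one, div_self hN0, hper]
      simp
    have hshift : ∑ j ∈ Finset.range N, F (j + 1) = ∑ j ∈ Finset.range N, F j := by
      have := (Finset.sum_range_succ F N).symm.trans (Finset.sum_range_succ' F N)
      rw [hF] at this
      exact (add_right_cancel this).symm
    change _ = ∑ j ∈ Finset.range N, F j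
    rw [← hshift]
    simp only [g, F, Finset.mul_sum]
    refine Finset.sum_congr rfl fun j _ => ?_
    rw [← mul_assoc, pow_succ, mul_pow, mul_comm (ω ^ k)]
    congr 2
    push_cast
    ring
  have hgquasi : ∀ k s v, g k (s + τ) v
      = Complex.exp (β v) * Complex.exp (-2 * Real.pi * Complex.I * (N * s)) * g k s v := by
    intro k s v
    simp only [g, Finset.mul_sum]
    refine Finset.sum_congr rfl fun j _ => ?_
    have hexp : Complex.exp (-2 * Real.pi * Complex.I * (N * (s + j / N)))
        = Complex.exp (-2 * Real.pi * Complex.I * (N * s)) := by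
      rw [Complex.exp_eq_exp_iff_exists_int]
      refine ⟨-j, ?_⟩
      push_cast
      field_simp
      ring
    rw [add_right_comm, hquasi, hexp]
    ring
  have hdecomp : ∀ s v, f s v = (N : ℂ)⁻¹ * ∑ k ∈ Finset.range N, g k s v := by
    intro s v
    simp only [g]
    rw [Finset.sum_comm, eq_inv_mul_iff_mul_eq₀ hN0,
      Finset.sum_eq_single_of_mem 0 (Finset.mem_range.mpr hN)]
    · simp
    · intro j hj hj0
      rw [← Finset.sum_mul]
      have hne : ω ^ j ≠ 1 :=
        hω.pow_ne_one_of_pos_of_lt hj0 (Finset.mem_range.mp hj)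
      have hpow : (ω ^ j) ^ N = 1 := by rw [← pow_mul, mul_comm, pow_mul, hω.pow_eq_one, one_pow]
      rw [geom_sum_eq hne, hpow, sub_self, zero_div, zero_mul]
  have hT : 0 < ((N : ℂ) * τ).im := by
    have : (0 : ℝ) < N := by exact_mod_cast hN
    simpa using mul_pos this hτ
  have hGdiff : ∀ k, Differentiable ℂ fun z => G k (N * l z) (m z) := by
    intro k
    refine differentiable_degree_one (G := G k) hT
      (β := fun v => β v - 2 * Real.pi * Complex.I * k * τ) (l := fun z => N * l z) (by fun_prop)
      (by fun_prop) hm (fun v => ?_) (fun s => ?_) (fun s v => ?_) (fun s v => ?_)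
    · have h1 : Differentiable ℂ fun s : ℂ =>
          Complex.exp (-(2 * Real.pi * Complex.I * k / N * s)) := by fun_prop
      exact h1.mul ((hg₁ k v).comp (by fun_prop : Differentiable ℂ fun s : ℂ => s / N))
    · exact (hg₂ k _).const_mul _
    · simp only [G]
      have hωk : Complex.exp (-(2 * Real.pi * Complex.I * k / N * (s + 1)))
          = Complex.exp (-(2 * Real.pi * Complex.I * k / N * s)) * ω ^ k := by
        simp only [ω]
        rw [← Complex.exp_nat_mul, ← Complex.exp_add]
        congr 1
        ring
      rw [hωk, add_div, mul_assoc, hgstep]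
    · simp only [G]
      have hdiv : (s + N * τ) / N = s / N + τ := by field_simp
      rw [hdiv, hgquasi]
      have hexp : Complex.exp (-(2 * Real.pi * Complex.I * k / N * (s + N * τ)))
          * Complex.exp (β v) * Complex.exp (-2 * Real.pi * Complex.I * (N * (s / N)))
          = Complex.exp (β v - 2 * Real.pi * Complex.I * k * τ)
            * Complex.exp (-2 * Real.pi * Complex.I * s)
            * Complex.exp (-(2 * Real.pi * Complex.I * k / N * s)) := by
        simp only [← Complex.exp_add]
        congr 1
        field_simp
        ring
      linear_combination g k (s / N) v * hexp
  have hrepr : (fun z => f (l z) (m z)) = fun z => (N : ℂ)⁻¹ * ∑ k ∈ Finset.range N,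
      Complex.exp (2 * Real.pi * Complex.I * k * l z) * G k (N * l z) (m z) := by
    funext z
    rw [hdecomp]
    congr 1
    refine Finset.sum_congr rfl fun k _ => ?_
    simp only [G]
    rw [← mul_assoc, ← Complex.exp_add, mul_div_cancel_left₀ _ hN0]
    have : 2 * Real.pi * Complex.I * k * l z
        + -(2 * Real.pi * Complex.I * k / N * (N * l z)) = 0 := by
      field_simp
      ring
    rw [this, Complex.exp_zero, one_mul]
  rw [hrepr]
  refine (Differentiable.fun_sum fun k _ => ?_).const_mul _
  exact Differentiable.mul (by fun_prop) (hGdiff k)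

/-- `ϑ₄` in terms of the two-variable Jacobi theta function. -/
lemma th4_eq_jacobiTheta₂ (z τ : ℂ) : th4 z τ = jacobiTheta₂ (z / Real.pi + 1 / 2) τ := by
  have hpi : (Real.pi : ℂ) ≠ 0 := by simp [Real.pi_ne_zero]
  unfold th4 jacobiTheta₂ jacobiTheta₂_term
  refine tsum_congr fun n => ?_
  rw [← Complex.exp_pi_mul_I, ← Complex.exp_int_mul, ← Complex.exp_add]
  congr 1
  field_simp
  ring

/-- `ϑ₁` in terms of the two-variable Jacobi theta function. -/
lemma th1_eq_jacobiTheta₂ (z τ : ℂ) : th1 z τ = -Complex.I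
    * Complex.exp (Real.pi * Complex.I * τ / 4 + Complex.I * z)
    * jacobiTheta₂ (z / Real.pi + 1 / 2 + τ / 2) τ := by
  have hpi : (Real.pi : ℂ) ≠ 0 := by simp [Real.pi_ne_zero]
  unfold th1 jacobiTheta₂ jacobiTheta₂_term
  rw [mul_assoc (-Complex.I), ← tsum_mul_left (a := Complex.exp (_ + _))]
  congr 1
  refine tsum_congr fun n => ?_
  rw [← Complex.exp_pi_mul_I, ← Complex.exp_int_mul, ← Complex.exp_add, ← Complex.exp_add]
  congr 1
  field_simp
  ring

lemma differentiable_th4 {τ : ℂ} (hτ : 0 < τ.im) : Differentiable ℂ fun z => th4 z τ := by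
  have hθ : Differentiable ℂ fun s => jacobiTheta₂ s τ :=
    fun s => differentiableAt_jacobiTheta₂_fst s hτ
  simp only [th4_eq_jacobiTheta₂]
  exact hθ.comp (by fun_prop : Differentiable ℂ fun z : ℂ => z / Real.pi + 1 / 2)

lemma differentiable_th1 {τ : ℂ} (hτ : 0 < τ.im) : Differentiable ℂ fun z => th1 z τ := by
  have hθ : Differentiable ℂ fun s => jacobiTheta₂ s τ :=
    fun s => differentiableAt_jacobiTheta₂_fst s hτ
  simp only [th1_eq_jacobiTheta₂]
  have hexp : Differentiable ℂ fun z : ℂ => -Complex.I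
      * Complex.exp (Real.pi * Complex.I * τ / 4 + Complex.I * z) := by fun_prop
  exact hexp.mul
    (hθ.comp (by fun_prop : Differentiable ℂ fun z : ℂ => z / Real.pi + 1 / 2 + τ / 2))

lemma th4_add_pi (z τ : ℂ) : th4 (z + Real.pi) τ = th4 z τ := by
  have hpi : (Real.pi : ℂ) ≠ 0 := by simp [Real.pi_ne_zero]
  rw [th4_eq_jacobiTheta₂, th4_eq_jacobiTheta₂, ← jacobiTheta₂_add_left (z / Real.pi + 1 / 2)]
  congr 1
  field_simp
  ring

lemma th1_add_pi (z τ : ℂ) : th1 (z + Real.pi) τ = -th1 z τ := by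
  have hpi : (Real.pi : ℂ) ≠ 0 := by simp [Real.pi_ne_zero]
  have harg : (z + Real.pi) / Real.pi + 1 / 2 + τ / 2 = z / Real.pi + 1 / 2 + τ / 2 + 1 := by
    field_simp
    ring
  have hexp : Complex.exp (Real.pi * Complex.I * τ / 4 + Complex.I * (z + Real.pi))
      = -Complex.exp (Real.pi * Complex.I * τ / 4 + Complex.I * z) := by
    rw [mul_add, ← add_assoc, Complex.exp_add, mul_comm Complex.I (Real.pi : ℂ),
      Complex.exp_pi_mul_I, mul_neg_one]
  rw [th1_eq_jacobiTheta₂, th1_eq_jacobiTheta₂, harg, jacobiTheta₂_add_left, hexp]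
  ring

/-- Shift of `ϑ₄(·, p²)` by half of its quasi-period. -/
lemma th4_add_half_period (z τ : ℂ) : th4 (z + Real.pi * τ) (2 * τ)
    = Complex.I * Complex.exp (-(Real.pi * Complex.I * τ / 2) - Complex.I * z)
      * th1 z (2 * τ) := by
  have hpi : (Real.pi : ℂ) ≠ 0 := by simp [Real.pi_ne_zero]
  have harg : (z + Real.pi * τ) / Real.pi + 1 / 2 = z / Real.pi + 1 / 2 + 2 * τ / 2 := by
    field_simp
    ring
  have hexp : Complex.exp (-(Real.pi * Complex.I * τ / 2) - Complex.I * z)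
      * Complex.exp (Real.pi * Complex.I * (2 * τ) / 4 + Complex.I * z) = 1 := by
    rw [← Complex.exp_add, ← Complex.exp_zero]
    congr 1
    ring
  rw [th4_eq_jacobiTheta₂, th1_eq_jacobiTheta₂, harg]
  linear_combination (-jacobiTheta₂ (z / Real.pi + 1 / 2 + 2 * τ / 2) (2 * τ)) * hexp
    + (Complex.exp (-(Real.pi * Complex.I * τ / 2) - Complex.I * z)
      * Complex.exp (Real.pi * Complex.I * (2 * τ) / 4 + Complex.I * z)
      * jacobiTheta₂ (z / Real.pi + 1 / 2 + 2 * τ / 2) (2 * τ)) * Complex.I_mul_I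

/-- Shift of `ϑ₁(·, p²)` by half of its quasi-period. -/
lemma th1_add_half_period (z τ : ℂ) : th1 (z + Real.pi * τ) (2 * τ)
    = Complex.I * Complex.exp (-(Real.pi * Complex.I * τ / 2) - Complex.I * z)
      * th4 z (2 * τ) := by
  have hpi : (Real.pi : ℂ) ≠ 0 := by simp [Real.pi_ne_zero]
  have harg : (z + Real.pi * τ) / Real.pi + 1 / 2 + 2 * τ / 2
      = z / Real.pi + 1 / 2 + 2 * τ := by
    field_simp
    ring
  have hexp : Complex.exp (Real.pi * Complex.I * (2 * τ) / 4 + Complex.I * (z + Real.pi * τ))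
      * Complex.exp (-Real.pi * Complex.I * (2 * τ + 2 * (z / Real.pi + 1 / 2)))
      = -Complex.exp (-(Real.pi * Complex.I * τ / 2) - Complex.I * z) := by
    rw [← Complex.exp_add, ← mul_neg_one (Complex.exp (_ - _)), ← Complex.exp_pi_mul_I,
      ← Complex.exp_add, Complex.exp_eq_exp_iff_exists_int]
    refine ⟨-1, ?_⟩
    push_cast
    field_simp
    ring
  rw [th1_eq_jacobiTheta₂, th4_eq_jacobiTheta₂, harg, jacobiTheta₂_add_left']
  linear_combination (-Complex.I * jacobiTheta₂ (z / Real.pi + 1 / 2) (2 * τ)) * hexp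

/-- The eigenvalue of `σᶻ` on a basis spin. -/
def spinSign (s : Fin 2) : ℂ := if s = 0 then 1 else -1

lemma spinSign_mul_self (s : Fin 2) : spinSign s * spinSign s = 1 := by
  unfold spinSign; split_ifs <;> norm_num

lemma flipS_flipS (s : Fin 2) : flipS (flipS s) = s := by
  fin_cases s <;> simp [flipS]

/-- The behaviour of the components of a two-site boundary vector which makes its pairing with
`Ψ_n` a theta function. -/
structure IsBoundaryVector (τ : ℂ) (c : ℂ → Fin 2 → Fin 2 → ℂ) : Prop where
  differentiable : ∀ s t, Differentiable ℂ fun z => c z s t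
  add_pi : ∀ z s t, c (z + Real.pi) s t = spinSign s * spinSign t * c z s t
  add_pi_mul : ∀ z s t, c (z + Real.pi * τ) (flipS s) (flipS t)
    = -(pnome τ)⁻¹ * Complex.exp (-2 * Complex.I * (z - ηc)) * c z s t

lemma half_period_factor (τ z lam : ℂ) :
    Complex.I * Complex.exp (-(Real.pi * Complex.I * τ / 2) - Complex.I * (z + lam))
      * (Complex.I * Complex.exp (-(Real.pi * Complex.I * τ / 2)
        - Complex.I * (z - lam - 2 * ηc)))
      = -(pnome τ)⁻¹ * Complex.exp (-2 * Complex.I * (z - ηc)) := by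
  have hexp : Complex.exp (-(Real.pi * Complex.I * τ / 2) - Complex.I * (z + lam))
      * Complex.exp (-(Real.pi * Complex.I * τ / 2) - Complex.I * (z - lam - 2 * ηc))
      = (pnome τ)⁻¹ * Complex.exp (-2 * Complex.I * (z - ηc)) := by
    unfold pnome
    rw [← Complex.exp_neg, ← Complex.exp_add, ← Complex.exp_add]
    congr 1
    ring
  linear_combination Complex.I * Complex.I * hexp
    + (pnome τ)⁻¹ * Complex.exp (-2 * Complex.I * (z - ηc)) * Complex.I_mul_I

lemma isBoundaryVector_chiC {τ : ℂ} (hτ : 0 < τ.im) (lam : ℂ) :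
    IsBoundaryVector τ (chiC τ lam) := by
  have h2 : 0 < (2 * τ).im := by simpa using hτ
  have d1 := differentiable_th1 h2
  have d4 := differentiable_th4 h2
  constructor
  · intro s t
    have e1 : Differentiable ℂ fun z => th1 (z + lam) (2 * τ) := d1.comp (by fun_prop)
    have e2 : Differentiable ℂ fun z => th1 (z - lam - 2 * ηc) (2 * τ) := d1.comp (by fun_prop)
    have e3 : Differentiable ℂ fun z => th4 (z + lam) (2 * τ) := d4.comp (by fun_prop)
    have e4 : Differentiable ℂ fun z => th4 (z - lam - 2 * ηc) (2 * τ) := d4.comp (by fun_prop)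
    fin_cases s <;> fin_cases t <;> simp [chiC] <;> fun_prop
  · intro z s t
    have e1 : z + Real.pi + lam = z + lam + Real.pi := by ring
    have e2 : z + Real.pi - lam - 2 * ηc = z - lam - 2 * ηc + Real.pi := by ring
    fin_cases s <;> fin_cases t <;>
      simp [chiC, spinSign, e1, e2, th1_add_pi, th4_add_pi]
  · intro z s t
    have e1 : z + Real.pi * τ + lam = z + lam + Real.pi * τ := by ring
    have e2 : z + Real.pi * τ - lam - 2 * ηc = z - lam - 2 * ηc + Real.pi * τ := by ring
    rw [← half_period_factor τ z lam]
    fin_cases s <;> fin_cases t <;>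
      simp [chiC, flipS, e1, e2, th1_add_half_period, th4_add_half_period] <;> ring

lemma isBoundaryVector_chibarC {τ : ℂ} (hτ : 0 < τ.im) (lam : ℂ) :
    IsBoundaryVector τ (chibarC τ lam) := by
  have h2 : 0 < (2 * τ).im := by simpa using hτ
  have d1 := differentiable_th1 h2
  have d4 := differentiable_th4 h2
  constructor
  · intro s t
    have e1 : Differentiable ℂ fun z => th1 (z + lam) (2 * τ) := d1.comp (by fun_prop)
    have e2 : Differentiable ℂ fun z => th1 (z - lam - 2 * ηc) (2 * τ) := d1.comp (by fun_prop)
    have e3 : Differentiable ℂ fun z => th4 (z + lam) (2 * τ) := d4.comp (by fun_prop)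
    have e4 : Differentiable ℂ fun z => th4 (z - lam - 2 * ηc) (2 * τ) := d4.comp (by fun_prop)
    fin_cases s <;> fin_cases t <;> simp [chibarC] <;> fun_prop
  · intro z s t
    have e1 : z + Real.pi + lam = z + lam + Real.pi := by ring
    have e2 : z + Real.pi - lam - 2 * ηc = z - lam - 2 * ηc + Real.pi := by ring
    fin_cases s <;> fin_cases t <;>
      simp [chibarC, spinSign, e1, e2, th1_add_pi, th4_add_pi]
  · intro z s t
    have e1 : z + Real.pi * τ + lam = z + lam + Real.pi * τ := by ring
    have e2 : z + Real.pi * τ - lam - 2 * ηc = z - lam - 2 * ηc + Real.pi * τ := by ring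
    rw [← half_period_factor τ z lam]
    fin_cases s <;> fin_cases t <;>
      simp [chibarC, flipS, e1, e2, th1_add_half_period, th4_add_half_period] <;> ring

/-- The point with coordinates `z` and `-z` at positions `a` and `b`, and `u` elsewhere. -/
def oppositePair {L : ℕ} (u : Fin L → ℂ) (a b : Fin L) (z : ℂ) : Fin L → ℂ :=
  Function.update (Function.update u a z) b (-z)

/-- Flip the spins at positions `a` and `b`. -/
def flipPair {L : ℕ} (a b : Fin L) (α : Fin L → Fin 2) : Fin L → Fin 2 :=
  fun j => if j = a ∨ j = b then flipS (α j) else α j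

lemma flipPair_involutive {L : ℕ} (a b : Fin L) : Function.Involutive (flipPair a b) := by
  intro α
  funext j
  by_cases h : j = a ∨ j = b <;> simp [flipPair, h, flipS_flipS]

lemma differentiable_psi_oppositePair {τ : ℂ} (hτ : 0 < τ.im) {Ψ : PsiFam}
    (hent : PsiEntire Ψ) (h3 : PsiP3 τ Ψ) {n : ℕ} (hn : 1 ≤ n) (u : Fin (2 * n + 1) → ℂ)
    {a b : Fin (2 * n + 1)} (hab : a ≠ b) (α : Fin (2 * n + 1) → Fin 2) :
    Differentiable ℂ fun z => Ψ n (oppositePair u a b z) α := by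
  have hpi : (Real.pi : ℂ) ≠ 0 := by simp [Real.pi_ne_zero]
  let f : ℂ → ℂ → ℂ := fun s v =>
    Ψ n (Function.update (Function.update u b v) a (2 * Real.pi * s)) α
  let S : ℂ := ∑ j ∈ (Finset.univ \ {a}) \ {b}, u j
  have hsum : ∀ t v, ∑ j, Function.update (Function.update u b v) a t j = t + (v + S) := by
    intro t v
    rw [Finset.sum_update_of_mem (Finset.mem_univ a), Finset.sum_update_of_mem]
    simp [hab.symm]
  have hpsi : (fun z => Ψ n (oppositePair u a b z) α)
      = fun z => f (z / (2 * Real.pi)) (-z) := by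
    funext z
    simp only [f, oppositePair]
    rw [Function.update_comm hab, mul_div_cancel₀ z (by simp [hpi])]
  rw [hpsi]
  refine differentiable_of_quasiperiodic (f := f) hτ (N := 4 * n) (by omega)
    (β := fun v => -(4 * n * (Real.pi * Complex.I * τ)) + 2 * Complex.I * (v + S))
    (l := fun z => z / (2 * Real.pi)) (m := fun z => -z)
    (by fun_prop) (by fun_prop) (by fun_prop) (fun v => ?_) (fun s => ?_) (fun s v => ?_)
    (fun s v => ?_)
  · exact (hent n (Function.update u b v) a α).comp
      (by fun_prop : Differentiable ℂ fun s : ℂ => 2 * Real.pi * s)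
  · simp only [f, Function.update_comm hab.symm]
    exact hent n _ b α
  · have hstep : ∀ t : ℂ, Ψ n (Function.update (Function.update u b v) a (t + Real.pi)) α
        = (∏ j ∈ Finset.univ.erase a, spinSign (α j))
          * Ψ n (Function.update (Function.update u b v) a t) α := by
      intro t
      have := congrFun (h3 n (Function.update (Function.update u b v) a t) a).1 α
      simpa [spinSign] using this
    have harg : 2 * Real.pi * (s + 1) = 2 * Real.pi * s + Real.pi + Real.pi := by ring
    simp only [f, harg, hstep]
    rw [← mul_assoc, ← Finset.prod_mul_distrib]
    simp [spinSign_mul_self]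
  · have := congrFun (h3 n (Function.update (Function.update u b v) a (2 * Real.pi * s)) a).2 α
    have harg : 2 * Real.pi * (s + τ) = 2 * Real.pi * s + 2 * Real.pi * τ := by ring
    simp only [Function.update_self, Function.update_idem, Finset.sum_sub_distrib, hsum,
      Finset.sum_const, Finset.card_univ, Fintype.card_fin, nsmul_eq_mul] at this
    simp only [f, harg, this]
    congr 1
    rw [pnome, ← Complex.exp_nat_mul, ← Complex.exp_neg, ← Complex.exp_add, ← Complex.exp_add]
    congr 1
    push_cast
    ring

lemma psi_oppositePair_add_pi {τ : ℂ} {Ψ : PsiFam} (h3 : PsiP3 τ Ψ) {n : ℕ}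
    (u : Fin (2 * n + 1) → ℂ) {a b : Fin (2 * n + 1)} (hab : a ≠ b) (z : ℂ)
    (α : Fin (2 * n + 1) → Fin 2) :
    Ψ n (oppositePair u a b (z + Real.pi)) α
      = spinSign (α a) * spinSign (α b) * Ψ n (oppositePair u a b z) α := by
  have ha := congrFun (h3 n (oppositePair u a b z) a).1 α
  have hb := congrFun (h3 n (oppositePair u a b (z + Real.pi)) b).1 α
  have hmid : Function.update (oppositePair u a b (z + Real.pi)) b
      (oppositePair u a b (z + Real.pi) b + Real.pi)
      = Function.update (oppositePair u a b z) a (oppositePair u a b z a + Real.pi) := by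
    simp only [oppositePair, Function.update_self, Function.update_idem,
      Function.update_of_ne hab]
    rw [Function.update_comm hab.symm, Function.update_idem]
    congr 1
    ring
  rw [hmid, ha] at hb
  have hpa := Finset.mul_prod_erase Finset.univ (fun j => spinSign (α j)) (Finset.mem_univ a)
  have hpb := Finset.mul_prod_erase Finset.univ (fun j => spinSign (α j)) (Finset.mem_univ b)
  have hsq : (∏ j ∈ Finset.univ.erase b, spinSign (α j))
      * (∏ j ∈ Finset.univ.erase b, spinSign (α j)) = 1 := by
    rw [← Finset.prod_mul_distrib]
    simp [spinSign_mul_self]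
  change (∏ j ∈ Finset.univ.erase a, spinSign (α j)) * _
    = (∏ j ∈ Finset.univ.erase b, spinSign (α j)) * _ at hb
  set A := ∏ j ∈ Finset.univ.erase a, spinSign (α j)
  set B := ∏ j ∈ Finset.univ.erase b, spinSign (α j)
  have hA : A = spinSign (α a) * spinSign (α b) * B := by
    linear_combination spinSign (α a) * (hpa.trans hpb.symm) - A * spinSign_mul_self (α a)
  rw [hA] at hb
  linear_combination (spinSign (α a) * spinSign (α b) * Ψ n (oppositePair u a b z) α
    - Ψ n (oppositePair u a b (z + Real.pi)) α) * hsq - B * hb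

lemma psi_oppositePair_add_pi_mul {τ : ℂ} {Ψ : PsiFam} (h2 : PsiP2 τ Ψ) {n : ℕ}
    (u : Fin (2 * n + 1) → ℂ) {a b : Fin (2 * n + 1)} (hab : a ≠ b)
    (hsum : ∀ z, ∑ j, oppositePair u a b z j = 0) (z : ℂ)
    (α : Fin (2 * n + 1) → Fin 2) :
    Ψ n (oppositePair u a b (z + Real.pi * τ)) α
      = Complex.exp (Complex.I * (2 * n + 1) * (-2 * z - Real.pi * τ))
        * Ψ n (oppositePair u a b z) (flipPair a b α) := by
  let αflip : Fin (2 * n + 1) → Fin 2 := Function.update α b (flipS (α b))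
  have ha := h2 n (oppositePair u a b z) a αflip
  have hb := h2 n (oppositePair u a b (z + Real.pi * τ)) b αflip
  have hαa : Function.update αflip a (flipS (αflip a)) = flipPair a b α := by
    funext j
    by_cases hja : j = a
    · subst hja; simp [αflip, flipPair, hab]
    · by_cases hjb : j = b
      · subst hjb; simp [αflip, flipPair, hja]
      · simp [αflip, flipPair, hja, hjb]
  have hαb : Function.update αflip b (flipS (αflip b)) = α := by
    simp [αflip, flipS_flipS]
  have hmid : Function.update (oppositePair u a b (z + Real.pi * τ)) b
      (oppositePair u a b (z + Real.pi * τ) b + Real.pi * τ)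
      = Function.update (oppositePair u a b z) a
        (oppositePair u a b z a + Real.pi * τ) := by
    simp only [oppositePair, Function.update_self, Function.update_idem,
      Function.update_of_ne hab]
    rw [Function.update_comm hab.symm, Function.update_idem]
    congr 1
    ring
  have hza : oppositePair u a b z a = z := by simp [oppositePair, hab]
  have hzb : oppositePair u a b (z + Real.pi * τ) b = -(z + Real.pi * τ) := by
    simp [oppositePair]
  rw [hαa] at ha
  rw [hαb, hmid] at hb
  rw [ha, hb]
  simp only [Finset.sum_sub_distrib, hsum, Finset.sum_const, Finset.card_univ,
    Fintype.card_fin, nsmul_eq_mul]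
  rw [hza, hzb]
  have hexp : Complex.exp (-Complex.I * (0 - ((2 * n + 1 : ℕ) : ℂ) * -(z + Real.pi * τ)))
      = Complex.exp (Complex.I * (2 * n + 1) * (-2 * z - Real.pi * τ))
        * Complex.exp (-Complex.I * (0 - ((2 * n + 1 : ℕ) : ℂ) * z)) := by
    rw [← Complex.exp_add]
    congr 1
    push_cast
    ring
  rw [hexp]
  ring

lemma sum_interleave {n : ℕ} (x : Fin n → ℂ) : ∑ j, interleave x j = 0 := by
  let φ : ℕ → ℂ := fun j => if h : j < 2 * n + 1 then interleave x ⟨j, h⟩ else 0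
  have hφ : ∑ j, interleave x j = ∑ j ∈ Finset.range (2 * n + 1), φ j := by
    rw [Finset.sum_range]
    exact Finset.sum_congr rfl fun j _ => by simp only [φ, j.2, dif_pos]
  have hpart : ∀ k ≤ n, ∑ j ∈ Finset.range (2 * k), φ j = 0 := by
    intro k
    induction k with
    | zero => simp
    | succ k ih =>
      intro hk
      have h1 : φ (2 * k) = x ⟨k, by omega⟩ := by
        simp [φ, interleave, show k ≤ n by omega, show k < n by omega]
      have h2 : φ (2 * k + 1) = -x ⟨k, by omega⟩ := by
        have e : (2 * k + 1) / 2 = k := by omega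
        simp [φ, interleave, show k < n by omega, show 2 * k + 1 < 2 * n by omega, e]
      rw [show 2 * (k + 1) = 2 * k + 1 + 1 by ring, Finset.sum_range_succ,
        Finset.sum_range_succ, ih (by omega), h1, h2]
      ring
  rw [hφ, Finset.sum_range_succ, hpart n le_rfl]
  simp [φ, interleave]

lemma interleave_update {n : ℕ} (x : Fin n → ℂ) (i : Fin n) (z : ℂ) :
    interleave (Function.update x i z)
      = oppositePair (interleave x) ⟨2 * (i : ℕ), by omega⟩ ⟨2 * (i : ℕ) + 1, by omega⟩ z := by
  funext j
  obtain ⟨j, hj⟩ := j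
  obtain ⟨i, hi⟩ := i
  simp only [oppositePair, Function.update_apply, interleave, Fin.mk.injEq]
  grind

/-- The pairing of a product of two-site boundary vectors and a one-site vector with `Ψ_n`. -/
def boundaryPairing (c : ℂ → Fin 2 → Fin 2 → ℂ) (w : Fin 2 → ℂ) (Ψ : PsiFam) (n : ℕ)
    (x : Fin n → ℂ) : ℂ :=
  ∑ α : Fin (2 * n + 1) → Fin 2,
    (∏ m : Fin n, c (x m)
        (α ⟨2 * (m : ℕ), by have := m.2; omega⟩) (α ⟨2 * (m : ℕ) + 1, by have := m.2; omega⟩))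
      * w (α ⟨2 * n, by omega⟩)
      * Ψ n (interleave x) α

/-- The part of a boundary vector component which does not involve the `i`-th variable. -/
def boundaryCofactor (c : ℂ → Fin 2 → Fin 2 → ℂ) (w : Fin 2 → ℂ) {n : ℕ} (x : Fin n → ℂ)
    (i : Fin n) (α : Fin (2 * n + 1) → Fin 2) : ℂ :=
  (∏ m ∈ Finset.univ.erase i, c (x m)
      (α ⟨2 * (m : ℕ), by have := m.2; omega⟩) (α ⟨2 * (m : ℕ) + 1, by have := m.2; omega⟩))
    * w (α ⟨2 * n, by omega⟩)

lemma boundaryCofactor_flipPair (c : ℂ → Fin 2 → Fin 2 → ℂ) (w : Fin 2 → ℂ) {n : ℕ}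
    (x : Fin n → ℂ) (i : Fin n) (α : Fin (2 * n + 1) → Fin 2) :
    boundaryCofactor c w x i
        (flipPair ⟨2 * (i : ℕ), by omega⟩ ⟨2 * (i : ℕ) + 1, by omega⟩ α)
      = boundaryCofactor c w x i α := by
  unfold boundaryCofactor
  congr 1
  · refine Finset.prod_congr rfl fun m hm => ?_
    have hmi : (m : ℕ) ≠ i := fun h => (Finset.mem_erase.mp hm).1 (Fin.ext h)
    have e1 : ¬ (2 * (m : ℕ) = 2 * (i : ℕ) + 1) := by omega
    have e2 : ¬ (2 * (m : ℕ) + 1 = 2 * (i : ℕ)) := by omega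
    simp [flipPair, hmi, e1, e2]
  · have hi := i.2
    have e1 : n ≠ (i : ℕ) := by omega
    have e2 : ¬ (2 * n = 2 * (i : ℕ) + 1) := by omega
    simp [flipPair, e1, e2]

lemma boundaryPairing_update (c : ℂ → Fin 2 → Fin 2 → ℂ) (w : Fin 2 → ℂ) (Ψ : PsiFam) {n : ℕ}
    (x : Fin n → ℂ) (i : Fin n) (z : ℂ) :
    boundaryPairing c w Ψ n (Function.update x i z)
      = ∑ α : Fin (2 * n + 1) → Fin 2,
        c z (α ⟨2 * (i : ℕ), by omega⟩) (α ⟨2 * (i : ℕ) + 1, by omega⟩)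
          * boundaryCofactor c w x i α
          * Ψ n (oppositePair (interleave x) ⟨2 * (i : ℕ), by omega⟩
              ⟨2 * (i : ℕ) + 1, by omega⟩ z) α := by
  unfold boundaryPairing boundaryCofactor
  refine Finset.sum_congr rfl fun α _ => ?_
  rw [interleave_update, ← Finset.mul_prod_erase Finset.univ _ (Finset.mem_univ i),
    Function.update_self, ← mul_assoc]
  congr 3
  refine Finset.prod_congr rfl fun m hm => ?_
  rw [Function.update_of_ne (Finset.mem_erase.mp hm).1]

/-- The pairing of boundary vectors with `Ψ_n` is a theta function of degree `2(n+1)` and norm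
`η + π/2` in each variable. -/
theorem boundaryPairing_theta {τ : ℂ} (hτ : 0 < τ.im) {Ψ : PsiFam} (hent : PsiEntire Ψ)
    (h2 : PsiP2 τ Ψ) (h3 : PsiP3 τ Ψ) {n : ℕ} (hn : 1 ≤ n) {c : ℂ → Fin 2 → Fin 2 → ℂ}
    (hc : IsBoundaryVector τ c) (w : Fin 2 → ℂ) (x : Fin n → ℂ) (i : Fin n) :
    Differentiable ℂ (fun z => boundaryPairing c w Ψ n (Function.update x i z)) ∧
    (∀ z, boundaryPairing c w Ψ n (Function.update x i (z + Real.pi))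
      = boundaryPairing c w Ψ n (Function.update x i z)) ∧
    (∀ z, boundaryPairing c w Ψ n (Function.update x i (z + Real.pi * τ))
      = (pnome τ ^ (2 * (n + 1)))⁻¹
        * Complex.exp (-2 * Complex.I * (2 * ((n : ℂ) + 1) * z - (ηc + (Real.pi : ℂ) / 2)))
        * boundaryPairing c w Ψ n (Function.update x i z)) := by
  simp only [boundaryPairing_update]
  have hcof := boundaryCofactor_flipPair c w x i
  have hsum : ∀ z, ∑ j, oppositePair (interleave x) ⟨2 * (i : ℕ), by omega⟩
      ⟨2 * (i : ℕ) + 1, by omega⟩ z j = 0 := fun z => by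
    rw [← interleave_update, sum_interleave]
  set a : Fin (2 * n + 1) := ⟨2 * (i : ℕ), by omega⟩ with ha
  set b : Fin (2 * n + 1) := ⟨2 * (i : ℕ) + 1, by omega⟩ with hb
  have hab : a ≠ b := by simp [ha, hb]
  refine ⟨?_, fun z => ?_, fun z => ?_⟩
  · exact Differentiable.fun_sum fun α _ => ((hc.differentiable _ _).mul_const _).mul
      (differentiable_psi_oppositePair hτ hent h3 hn _ hab α)
  · refine Finset.sum_congr rfl fun α _ => ?_
    rw [hc.add_pi, psi_oppositePair_add_pi h3 _ hab]
    linear_combination (c z (α a) (α b) * boundaryCofactor c w x i α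
      * Ψ n (oppositePair (interleave x) a b z) α) *
      (spinSign (α b) * spinSign (α b) * spinSign_mul_self (α a) + spinSign_mul_self (α b))
  · rw [← Equiv.sum_comp (flipPair_involutive a b).toPerm, Finset.mul_sum]
    refine Finset.sum_congr rfl fun α _ => ?_
    rw [Function.Involutive.coe_toPerm, psi_oppositePair_add_pi_mul h2 _ hab hsum,
      flipPair_involutive a b α, hcof]
    have hfa : flipPair a b α a = flipS (α a) := by simp [flipPair]
    have hfb : flipPair a b α b = flipS (α b) := by simp [flipPair]
    rw [hfa, hfb, hc.add_pi_mul]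
    have hexp : -(pnome τ)⁻¹ * Complex.exp (-2 * Complex.I * (z - ηc))
        * Complex.exp (Complex.I * (2 * n + 1) * (-2 * z - Real.pi * τ))
        = (pnome τ ^ (2 * (n + 1)))⁻¹
          * Complex.exp (-2 * Complex.I * (2 * ((n : ℂ) + 1) * z - (ηc + (Real.pi : ℂ) / 2))) := by
      unfold pnome
      rw [← mul_neg_one, ← Complex.exp_pi_mul_I, ← Complex.exp_neg, ← Complex.exp_nat_mul,
        ← Complex.exp_neg, ← Complex.exp_add, ← Complex.exp_add, ← Complex.exp_add,
        ← Complex.exp_add]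
      congr 1
      push_cast
      ring
    rw [← hexp]
    ring

theorem stmt11 (τ lam : ℂ) (hτ : 0 < τ.im) (Ψ : PsiFam)
    (hent : PsiEntire Ψ) (h1 : PsiP1 τ Ψ) (h2 : PsiP2 τ Ψ) (h3 : PsiP3 τ Ψ)
    (n : ℕ) (hn : 1 ≤ n) (x : Fin n → ℂ) (i : Fin n) :
    (Differentiable ℂ (fun z => Zfun τ lam Ψ n (Function.update x i z)) ∧
      (∀ z, Zfun τ lam Ψ n (Function.update x i (z + Real.pi))
          = Zfun τ lam Ψ n (Function.update x i z)) ∧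
      (∀ z, Zfun τ lam Ψ n (Function.update x i (z + Real.pi * τ))
          = (pnome τ ^ (2*(n+1)))⁻¹
            * Complex.exp (-2 * Complex.I * (2*((n:ℂ)+1)*z - (ηc + (Real.pi : ℂ)/2)))
            * Zfun τ lam Ψ n (Function.update x i z))) ∧
    (Differentiable ℂ (fun z => Zbarfun τ lam 1 Ψ n (Function.update x i z)) ∧
      (∀ z, Zbarfun τ lam 1 Ψ n (Function.update x i (z + Real.pi))
          = Zbarfun τ lam 1 Ψ n (Function.update x i z)) ∧
      (∀ z, Zbarfun τ lam 1 Ψ n (Function.update x i (z + Real.pi * τ))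
          = (pnome τ ^ (2*(n+1)))⁻¹
            * Complex.exp (-2 * Complex.I * (2*((n:ℂ)+1)*z - (ηc + (Real.pi : ℂ)/2)))
            * Zbarfun τ lam 1 Ψ n (Function.update x i z))) ∧
    (Differentiable ℂ (fun z => Zbarfun τ lam (-1) Ψ n (Function.update x i z)) ∧
      (∀ z, Zbarfun τ lam (-1) Ψ n (Function.update x i (z + Real.pi))
          = Zbarfun τ lam (-1) Ψ n (Function.update x i z)) ∧
      (∀ z, Zbarfun τ lam (-1) Ψ n (Function.update x i (z + Real.pi * τ))
          = (pnome τ ^ (2*(n+1)))⁻¹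
            * Complex.exp (-2 * Complex.I * (2*((n:ℂ)+1)*z - (ηc + (Real.pi : ℂ)/2)))
            * Zbarfun τ lam (-1) Ψ n (Function.update x i z))) := by
  have hchi := isBoundaryVector_chiC hτ lam
  have hchibar := isBoundaryVector_chibarC hτ lam
  exact ⟨boundaryPairing_theta hτ hent h2 h3 hn hchi (fun s => if s = 0 then 1 else 0) x i,
    boundaryPairing_theta hτ hent h2 h3 hn hchibar (fun s => if s = 0 then 1 else 1) x i,
    boundaryPairing_theta hτ hent h2 h3 hn hchibar (fun s => if s = 0 then 1 else -1) x i⟩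


end
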